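/- arXiv:1601.07228 — 7 statements merged into one kernel-verified Lean document; each statement's English description precedes it below -/
import Mathlib

section
/- Fix a real number c > 0 and a positive integer m with c·(m+1) ≤ 1. For a positive integer u, let Q_u denote the set of probability vectors q = (q_1, …, q_u) (q_i ≥ 0, ∑_i q_i = 1) satisfying q_i ≥ c for all i ∈ {1, …, u}. Then the minimum of the entropy H over Q_m is at most the minimum of H over Q_{m+1}; that is, min_{q ∈ Q_m} H(q) ≤ min_{q ∈ Q_{m+1}} H(q) (both minima exist since each Q_u is a nonempty compact set and H is continuous on it). -/
/-- Entropy in bits of a probability vector `q : Fin u → ℝ`,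
with the convention `0 * log₂ 0 = 0` (note `Real.logb 2 0 = 0`). -/
noncomputable def entropyBits {u : ℕ} (q : Fin u → ℝ) : ℝ :=
  -∑ i, q i * Real.logb 2 (q i)

/-- The set of probability vectors of length `u` all of whose components are at least `c`. -/
def Qset (c : ℝ) (u : ℕ) : Set (Fin u → ℝ) :=
  {q | (∀ i, 0 ≤ q i) ∧ (∑ i, q i) = 1 ∧ (∀ i, c ≤ q i)}

theorem min_entropy_mono (c : ℝ) (hc : 0 < c) (m : ℕ) (hm : 1 ≤ m)
    (hcm : c * (m + 1) ≤ 1) :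
    sInf (entropyBits '' Qset c m) ≤ sInf (entropyBits '' Qset c (m + 1)) := by
  have hbdd : BddBelow (entropyBits '' Qset c m) := by
    refine ⟨0, ?_⟩
    rintro _ ⟨q, ⟨h0, h1, _⟩, rfl⟩
    unfold entropyBits
    rw [neg_nonneg]
    refine Finset.sum_nonpos fun i _ => ?_
    have hle : q i ≤ 1 := by
      rw [← h1]
      exact Finset.single_le_sum (fun j _ => h0 j) (Finset.mem_univ i)
    exact mul_nonpos_of_nonneg_of_nonpos (h0 i)
      (Real.logb_nonpos (by norm_num) (h0 i) hle)
  have hpos : (0 : ℝ) < (m : ℝ) + 1 := by positivity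
  refine le_csInf ?_ ?_
  · refine Set.Nonempty.image _ ⟨fun _ => 1 / ((m : ℝ) + 1), fun _ => by positivity, ?_, ?_⟩
    · simp
      field_simp
    · intro _
      rw [le_div_iff₀ hpos]
      exact hcm
  · rintro _ ⟨q, ⟨h0, h1, h2⟩, rfl⟩
    obtain ⟨k, rfl⟩ : ∃ k, m = k + 1 := ⟨m - 1, by omega⟩
    rw [Fin.sum_univ_succ, Fin.sum_univ_succ] at h1
    have ha : 0 < q 0 := lt_of_lt_of_le hc (h2 0)
    have hb : 0 < q (Fin.succ 0) := lt_of_lt_of_le hc (h2 _)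
    let p : Fin (k + 1) → ℝ := Fin.cons (q 0 + q (Fin.succ 0)) (fun i => q i.succ.succ)
    have hp : p ∈ Qset c (k + 1) := by
      refine ⟨?_, ?_, ?_⟩
      · intro i
        refine Fin.cases ?_ (fun j => ?_) i
        · simp only [p, Fin.cons_zero]
          linarith
        · simp only [p, Fin.cons_succ]
          exact h0 _
      · rw [Fin.sum_univ_succ]
        simp only [p, Fin.cons_zero, Fin.cons_succ]
        linarith
      · intro i
        refine Fin.cases ?_ (fun j => ?_) i
        · simp only [p, Fin.cons_zero]
          linarith [h2 0]
        · simp only [p, Fin.cons_succ]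
          exact h2 _
    refine (csInf_le hbdd ⟨p, hp, rfl⟩).trans ?_
    unfold entropyBits
    rw [neg_le_neg_iff, Fin.sum_univ_succ, Fin.sum_univ_succ, Fin.sum_univ_succ]
    simp only [p, Fin.cons_zero, Fin.cons_succ]
    have l1 : Real.logb 2 (q 0) ≤ Real.logb 2 (q 0 + q (Fin.succ 0)) :=
      Real.logb_le_logb_of_le (by norm_num) ha (by linarith)
    have l2 : Real.logb 2 (q (Fin.succ 0)) ≤ Real.logb 2 (q 0 + q (Fin.succ 0)) :=
      Real.logb_le_logb_of_le (by norm_num) hb (by linarith)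
    have e1 := mul_le_mul_of_nonneg_left l1 ha.le
    have e2 := mul_le_mul_of_nonneg_left l2 hb.le
    rw [add_mul]
    linarith
end

section
/- Fix a real number c > 0 and an integer m ≥ 1 with c·(m+1) ≤ 1. If q = (q_1, …, q_{m+1}) is a probability vector with q_i > c (strictly) for every i ∈ {1, …, m+1}, then q does not minimize entropy among probability vectors with all components at least c: there exists a probability vector q' = (q'_1, …, q'_{m+1}) with q'_i ≥ c for all i and H(q') < H(q). -/
theorem aux_mid (a e : ℝ) (he : 0 < e) (h : e < a) :
    2 * (a * Real.logb 2 a) <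
      (a + e) * Real.logb 2 (a + e) + (a - e) * Real.logb 2 (a - e) := by
  have h2 : 0 < Real.log 2 := Real.log_pos (by norm_num)
  have hx : a + e ∈ Set.Ici (0 : ℝ) := by simp only [Set.mem_Ici]; linarith
  have hy : a - e ∈ Set.Ici (0 : ℝ) := by simp only [Set.mem_Ici]; linarith
  have hne : a + e ≠ a - e := by intro h; linarith
  have hh : (0 : ℝ) < 1 / 2 := by norm_num
  have key := (Real.strictConvexOn_mul_log).2 hx hy hne hh hh (by norm_num)
  simp only [smul_eq_mul] at key
  have e1 : (1/2 : ℝ) * (a + e) + 1/2 * (a - e) = a := by ring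
  rw [e1] at key
  simp only [Real.logb, ← mul_div_assoc]
  rw [← add_div]
  apply div_lt_div_of_pos_right _ h2
  linarith

theorem aux_perturb (c : ℝ) (hc : 0 < c) (k : ℕ) (q : Fin (k + 2) → ℝ) (s : ℝ)
    (hq1 : (∑ i, q i) = 1) (hqc : ∀ i, c < q i) (h0 : c ≤ q 0 + s) (h1 : c ≤ q 1 - s)
    (hlt : q 0 * Real.logb 2 (q 0) + q 1 * Real.logb 2 (q 1) <
      (q 0 + s) * Real.logb 2 (q 0 + s) + (q 1 - s) * Real.logb 2 (q 1 - s)) :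
    ∃ q' : Fin (k + 2) → ℝ,
      (∀ i, 0 ≤ q' i) ∧ (∑ i, q' i) = 1 ∧ (∀ i, c ≤ q' i) ∧
      entropyBits q' < entropyBits q := by
  let q' : Fin (k + 2) → ℝ :=
    Fin.cons (q 0 + s) (Fin.cons (q 1 - s) (fun i : Fin k => q i.succ.succ))
  have hge : ∀ i, c ≤ q' i := by
    intro i
    refine Fin.cases ?_ (fun i => Fin.cases ?_ (fun i => ?_) i) i
    · simpa [q'] using h0
    · simpa [q'] using h1
    · simpa [q'] using (hqc i.succ.succ).le
  refine ⟨q', fun i => hc.le.trans (hge i), ?_, hge, ?_⟩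
  · rw [← hq1]
    simp only [Fin.sum_univ_succ, q', Fin.cons_zero, Fin.cons_succ, Fin.succ_zero_eq_one]
    ring
  · unfold entropyBits
    simp only [Fin.sum_univ_succ, q', Fin.cons_zero, Fin.cons_succ, Fin.succ_zero_eq_one]
    linarith

theorem strict_interior_not_min (c : ℝ) (hc : 0 < c) (m : ℕ) (hm : 1 ≤ m)
    (hcm : c * (m + 1) ≤ 1) (q : Fin (m + 1) → ℝ)
    (hq0 : ∀ i, 0 ≤ q i) (hq1 : (∑ i, q i) = 1) (hqc : ∀ i, c < q i) :
    ∃ q' : Fin (m + 1) → ℝ,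
      (∀ i, 0 ≤ q' i) ∧ (∑ i, q' i) = 1 ∧ (∀ i, c ≤ q' i) ∧
      entropyBits q' < entropyBits q := by
  obtain ⟨k, rfl⟩ : ∃ k, m = k + 1 := ⟨m - 1, by omega⟩
  obtain ⟨e, he, ha, hb⟩ : ∃ e : ℝ, 0 < e ∧ e ≤ q 0 - c ∧ e ≤ q 1 - c :=
    ⟨min (q 0 - c) (q 1 - c), lt_min (by linarith [hqc 0]) (by linarith [hqc 1]),
      min_le_left _ _, min_le_right _ _⟩
  have A := aux_mid (q 0) e he (by linarith)
  have B := aux_mid (q 1) e he (by linarith)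
  by_cases h : q 0 * Real.logb 2 (q 0) + q 1 * Real.logb 2 (q 1) <
      (q 0 + e) * Real.logb 2 (q 0 + e) + (q 1 - e) * Real.logb 2 (q 1 - e)
  · exact aux_perturb c hc k q e hq1 hqc (by linarith) (by linarith) h
  · refine aux_perturb c hc k q (-e) hq1 hqc (by linarith) (by linarith) ?_
    rw [← sub_eq_add_neg, sub_neg_eq_add]
    linarith
end

section
/- Let p ∈ conv(P) with p ≠ p*. Let i = min{k : p*(k) ≠ p(k)} and j = max{k : p*(k) ≠ p(k)}. Then p*(i) > p(i) and p*(j) < p(j). -/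
open Finset

/-- The clumpy distribution `p*`: with `M = ∑ j, n j`, `p* = (1/M) ∑ j, e_j*`, where
`e_j*` is the 0–1 vector whose first `n j` coordinates are 1 and the rest 0. -/
noncomputable def pstar (L : ℕ) (n : Fin L → ℕ) : Fin L → ℝ :=
  fun i => (1 / (∑ j, n j : ℝ)) * ∑ j, (if (i : ℕ) < n j then (1 : ℝ) else 0)

/-- The set `P` of vectors `p = (1/M) ∑ j, e_j`, where each `e_j ∈ {0,1}^L` has
exactly `n j` coordinates equal to 1. -/
def Pset (L : ℕ) (n : Fin L → ℕ) : Set (Fin L → ℝ) :=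
  {p | ∃ e : Fin L → Fin L → ℝ,
    (∀ j i, e j i = 0 ∨ e j i = 1) ∧
    (∀ j, (∑ i, e j i) = (n j : ℝ)) ∧
    p = fun i => (1 / (∑ j, n j : ℝ)) * ∑ j, e j i}


lemma sum_estar {L n : ℕ} (h : n ≤ L) :
    ∑ k : Fin L, (if (k : ℕ) < n then (1 : ℝ) else 0) = n := by
  rw [Fin.sum_univ_eq_sum_range (fun k => if k < n then (1 : ℝ) else 0) L, Finset.sum_ite]
  have : (Finset.range L).filter (fun k => k < n) = Finset.range n := by
    ext x; simp; omega
  simp [this]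

lemma prefix_e {L n : ℕ} (h : n ≤ L) (m : ℕ) (e : Fin L → ℝ)
    (he : ∀ i, e i = 0 ∨ e i = 1) (hs : ∑ i, e i = (n : ℝ)) :
    ∑ k ∈ Finset.univ.filter (fun k : Fin L => (k : ℕ) < m), e k ≤
      ∑ k ∈ Finset.univ.filter (fun k : Fin L => (k : ℕ) < m), (if (k : ℕ) < n then (1 : ℝ) else 0) := by
  rcases le_total m n with hm | hm
  · apply Finset.sum_le_sum
    intro k hk
    simp only [Finset.mem_filter, Finset.mem_univ, true_and] at hk
    rw [if_pos (by omega)]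
    rcases he k with h | h <;> simp [h]
  · have h1 : ∑ k ∈ Finset.univ.filter (fun k : Fin L => (k : ℕ) < m), e k ≤ ∑ k, e k := by
      apply Finset.sum_le_sum_of_subset_of_nonneg (Finset.filter_subset _ _)
      intro k _ _
      rcases he k with h | h <;> simp [h]
    have h2 : ∑ k ∈ Finset.univ.filter (fun k : Fin L => (k : ℕ) < m), (if (k : ℕ) < n then (1 : ℝ) else 0)
        = ∑ k : Fin L, (if (k : ℕ) < n then (1 : ℝ) else 0) := by
      apply Finset.sum_subset (Finset.filter_subset _ _)
      intro k _ hk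
      simp only [Finset.mem_filter, Finset.mem_univ, true_and] at hk
      rw [if_neg (by omega)]
    rw [h2, sum_estar h]
    linarith

lemma hull_bound {L : ℕ} {n : Fin L → ℕ} (hnL : ∀ j, n j ≤ L) (m : ℕ)
    {p : Fin L → ℝ} (hp : p ∈ convexHull ℝ (Pset L n)) :
    ∑ k, p k = ∑ k, pstar L n k ∧
    ∑ k ∈ Finset.univ.filter (fun k : Fin L => (k : ℕ) < m), p k ≤ ∑ k ∈ Finset.univ.filter (fun k : Fin L => (k : ℕ) < m), pstar L n k := by
  have key : convexHull ℝ (Pset L n) ⊆ {p : Fin L → ℝ | ∑ k, p k = ∑ k, pstar L n k ∧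
    ∑ k ∈ Finset.univ.filter (fun k : Fin L => (k : ℕ) < m), p k ≤ ∑ k ∈ Finset.univ.filter (fun k : Fin L => (k : ℕ) < m), pstar L n k} := by
    apply convexHull_min
    · rintro q ⟨e, he, hs, rfl⟩
      constructor
      · simp only [pstar, ← Finset.mul_sum]
        congr 1
        rw [Finset.sum_comm]
        conv_rhs => rw [Finset.sum_comm]
        apply Finset.sum_congr rfl
        intro j _
        rw [hs, sum_estar (hnL j)]
      · simp only [pstar, ← Finset.mul_sum]
        apply mul_le_mul_of_nonneg_left _ (by positivity)
        rw [Finset.sum_comm]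
        conv_rhs => rw [Finset.sum_comm]
        exact Finset.sum_le_sum fun j _ => prefix_e (hnL j) m (e j) (he j) (hs j)
    · rintro x ⟨hx, hx'⟩ y ⟨hy, hy'⟩ a b ha hb hab
      simp only [Set.mem_ofPred_eq, Pi.add_apply, Pi.smul_apply, smul_eq_mul,
        Finset.sum_add_distrib, ← Finset.mul_sum]
      obtain rfl : b = 1 - a := by linarith
      constructor
      · rw [hx, hy]; ring
      · nlinarith [mul_le_mul_of_nonneg_left hx' ha, mul_le_mul_of_nonneg_left hy' hb]
  exact key hp

theorem pstar_first_last_difference (L : ℕ) (hL : 1 ≤ L) (n : Fin L → ℕ)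
    (hnL : ∀ j, n j ≤ L) (hne : ∃ j, n j ≠ 0)
    (p : Fin L → ℝ) (hp : p ∈ convexHull ℝ (Pset L n)) (hne' : p ≠ pstar L n)
    (i j : Fin L)
    (hi : pstar L n i ≠ p i) (himin : ∀ k, k < i → pstar L n k = p k)
    (hj : pstar L n j ≠ p j) (hjmax : ∀ k, j < k → pstar L n k = p k) :
    p i < pstar L n i ∧ pstar L n j < p j := by
  have hA := (hull_bound hnL (i + 1) hp).2
  obtain ⟨hT, hB⟩ := hull_bound hnL j hp
  constructor
  · refine lt_of_le_of_ne ?_ hi.symm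
    have hf : (Finset.univ.filter fun k : Fin L => (k : ℕ) < i + 1)
        = insert i (Finset.univ.filter fun k : Fin L => k < i) := by
      ext k
      simp only [Finset.mem_filter, Finset.mem_univ, true_and, Finset.mem_insert, Fin.ext_iff,
        Fin.lt_def]
      omega
    rw [hf, Finset.sum_insert (by simp), Finset.sum_insert (by simp)] at hA
    have hS : ∑ k ∈ Finset.univ.filter (fun k : Fin L => k < i), pstar L n k
        = ∑ k ∈ Finset.univ.filter (fun k : Fin L => k < i), p k :=
      Finset.sum_congr rfl (fun k hk => himin k (by simpa using hk))
    linarith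
  · refine lt_of_le_of_ne ?_ hj
    rw [← Finset.sum_filter_add_sum_filter_not Finset.univ (fun k : Fin L => (k : ℕ) < j) p,
      ← Finset.sum_filter_add_sum_filter_not Finset.univ (fun k : Fin L => (k : ℕ) < j)
        (pstar L n)] at hT
    have hf : (Finset.univ.filter fun k : Fin L => ¬ (k : ℕ) < j)
        = insert j (Finset.univ.filter fun k : Fin L => j < k) := by
      ext k
      simp only [Finset.mem_filter, Finset.mem_univ, true_and, Finset.mem_insert, Fin.ext_iff,
        Fin.lt_def]
      omega
    rw [hf, Finset.sum_insert (by simp), Finset.sum_insert (by simp)] at hT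
    have hS : ∑ k ∈ Finset.univ.filter (fun k : Fin L => j < k), pstar L n k
        = ∑ k ∈ Finset.univ.filter (fun k : Fin L => j < k), p k :=
      Finset.sum_congr rfl (fun k hk => hjmax k (by simpa using hk))
    linarith
end

section
/- The clumpy distribution p* is an extreme point of the convex set conv(P): if p_1, p_2 ∈ conv(P) satisfy p* = (p_1 + p_2)/2, then p_1 = p_2. -/
open Finset

/-- prefix sum -/
noncomputable def prefSum {L : ℕ} (k : ℕ) (p : Fin L → ℝ) : ℝ :=
  ∑ i : Fin L, (if (i : ℕ) < k then p i else 0)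

lemma prefSum_add {L : ℕ} (k : ℕ) (p q : Fin L → ℝ) (a b : ℝ) :
    prefSum k (a • p + b • q) = a * prefSum k p + b * prefSum k q := by
  unfold prefSum
  rw [Finset.mul_sum, Finset.mul_sum, ← Finset.sum_add_distrib]
  apply Finset.sum_congr rfl
  intro i _
  split_ifs <;> simp

lemma prefSum_succ {L : ℕ} (p : Fin L → ℝ) (i : Fin L) :
    prefSum ((i : ℕ) + 1) p - prefSum i p = p i := by
  unfold prefSum
  rw [← Finset.sum_sub_distrib, Finset.sum_eq_single i]
  · simp
  · intro b _ hb
    have : (b : ℕ) ≠ i := fun h => hb (Fin.ext h)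
    by_cases h : (b : ℕ) < i
    · simp [h, Nat.lt_succ_of_lt h]
    · have h2 : ¬ (b : ℕ) < i + 1 := by omega
      simp [h, h2]
  · simp

lemma prefSum_le_one {L m : ℕ} (k : ℕ) (hm : m ≤ L) (e : Fin L → ℝ)
    (he : ∀ i, e i = 0 ∨ e i = 1) (hs : ∑ i, e i = (m : ℝ)) :
    prefSum k e ≤ prefSum k (fun i : Fin L => if (i : ℕ) < m then (1 : ℝ) else 0) := by
  have h1 : ∀ i, e i ≤ 1 := fun i => by rcases he i with h | h <;> simp [h]
  have h0 : ∀ i, 0 ≤ e i := fun i => by rcases he i with h | h <;> simp [h]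
  unfold prefSum
  by_cases hk : k ≤ m
  · apply Finset.sum_le_sum
    intro i _
    by_cases h : (i : ℕ) < k
    · have h2 : (i : ℕ) < m := by omega
      simp [h, h2, h1]
    · simp [h]
  · have hc : (∑ i : Fin L, if (i : ℕ) < m then (1 : ℝ) else 0) = m := by
      rw [Fin.sum_univ_eq_sum_range (fun i => if i < m then (1 : ℝ) else 0) L,
        ← Finset.sum_filter]
      have : (Finset.range L).filter (fun i => i < m) = Finset.range m := by
        ext i; simp; omega
      rw [this]; simp
    calc _ ≤ ∑ i, e i := by
          apply Finset.sum_le_sum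
          intro i _
          split_ifs
          · exact le_rfl
          · exact h0 i
      _ = ∑ i : Fin L, (if (i : ℕ) < m then (1 : ℝ) else 0) := by rw [hs, hc]
      _ ≤ _ := by
          apply Finset.sum_le_sum
          intro i _
          by_cases h : (i : ℕ) < m
          · have h2 : (i : ℕ) < k := by omega
            simp [h, h2]
          · simp [h]

lemma prefSum_avg {L : ℕ} (k : ℕ) (c : ℝ) (e : Fin L → Fin L → ℝ) :
    prefSum k (fun i => c * ∑ j, e j i) = c * ∑ j, prefSum k (e j) := by
  unfold prefSum
  rw [Finset.sum_comm, Finset.mul_sum]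
  apply Finset.sum_congr rfl
  intro i _
  split_ifs <;> simp

lemma prefSum_le {L : ℕ} (n : Fin L → ℕ) (hnL : ∀ j, n j ≤ L) (k : ℕ) (p : Fin L → ℝ)
    (hp : p ∈ convexHull ℝ (Pset L n)) : prefSum k p ≤ prefSum k (pstar L n) := by
  have hconv : Convex ℝ {q : Fin L → ℝ | prefSum k q ≤ prefSum k (pstar L n)} := by
    intro x hx y hy a b ha hb hab
    simp only [Set.mem_ofPred_eq] at *
    rw [prefSum_add]
    have := mul_le_mul_of_nonneg_left hx ha
    have := mul_le_mul_of_nonneg_left hy hb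
    have : a * prefSum k (pstar L n) + b * prefSum k (pstar L n) = prefSum k (pstar L n) := by
      rw [← add_mul, hab, one_mul]
    linarith
  refine convexHull_min ?_ hconv hp
  rintro q ⟨e, he, hs, rfl⟩
  simp only [Set.mem_ofPred_eq]
  unfold pstar
  rw [prefSum_avg, prefSum_avg k _ (fun j i => if (i : ℕ) < n j then (1 : ℝ) else 0)]
  apply mul_le_mul_of_nonneg_left
  · exact Finset.sum_le_sum fun j _ => prefSum_le_one k (hnL j) (e j) (he j) (hs j)
  · positivity

theorem pstar_extreme_point (L : ℕ) (hL : 1 ≤ L) (n : Fin L → ℕ)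
    (hnL : ∀ j, n j ≤ L) (hne : ∃ j, n j ≠ 0)
    (p₁ p₂ : Fin L → ℝ)
    (hp₁ : p₁ ∈ convexHull ℝ (Pset L n)) (hp₂ : p₂ ∈ convexHull ℝ (Pset L n))
    (hmid : pstar L n = fun i => (p₁ i + p₂ i) / 2) :
    p₁ = p₂ := by
  have key : ∀ k, prefSum k p₁ = prefSum k p₂ := by
    intro k
    have h1 := prefSum_le n hnL k p₁ hp₁
    have h2 := prefSum_le n hnL k p₂ hp₂
    have h3 : prefSum k (pstar L n) = (1/2) * prefSum k p₁ + (1/2) * prefSum k p₂ := by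
      rw [hmid, ← prefSum_add]
      congr 1
      funext i
      simp only [Pi.add_apply, Pi.smul_apply, smul_eq_mul]
      ring
    linarith
  funext i
  rw [← prefSum_succ p₁ i, ← prefSum_succ p₂ i, key, key]
end

section
/- Every p ∈ conv(P) can be written as a convex combination of vectors that are coordinate permutations of p*: there exist finitely many permutations π_1, …, π_r of {1, …, L} and nonnegative reals μ_1, …, μ_r with ∑_l μ_l = 1 such that p = ∑_{l=1}^r μ_l·(p* ∘ π_l), where (p* ∘ π)(i) = p*(π(i)). -/
open Finset

/-- A 0-1 vector with `k` ones is a permutation of the initial indicator. -/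
lemma exists_perm_indicator (L k : ℕ) (hk : k ≤ L) (e : Fin L → ℝ)
    (h01 : ∀ i, e i = 0 ∨ e i = 1) (hs : ∑ i, e i = (k : ℝ)) :
    ∃ ρ : Equiv.Perm (Fin L), ∀ i, e i = if ((ρ i : Fin L) : ℕ) < k then (1 : ℝ) else 0 := by
  classical
  have h1 : ∀ i, e i = if e i = 1 then (1 : ℝ) else 0 := by
    intro i
    rcases h01 i with h | h <;> simp [h]
  have hc : Fintype.card {i // e i = 1} = Fintype.card {i : Fin L // (i : ℕ) < k} := by
    have h2 : ((Fintype.card {i // e i = 1} : ℕ) : ℝ) = k := by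
      rw [← hs, Finset.sum_congr rfl (fun i _ => h1 i), Finset.sum_boole, Fintype.card_subtype]
    have h3 : Fintype.card {i : Fin L // (i : ℕ) < k} = k := by
      rw [Fintype.card_subtype, Fin.card_filter_val_lt]
      omega
    rw [h3]
    exact_mod_cast h2
  let E := Fintype.equivOfCardEq hc
  refine ⟨E.extendSubtype, fun i => ?_⟩
  by_cases h : e i = 1
  · rw [if_pos (E.extendSubtype_mem i h), h]
  · rw [if_neg (E.extendSubtype_not_mem i h)]
    exact (h01 i).resolve_right h

lemma Pset_subset (L : ℕ) (n : Fin L → ℕ) (hnL : ∀ j, n j ≤ L) :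
    Pset L n ⊆ convexHull ℝ (Set.range fun π : Equiv.Perm (Fin L) => pstar L n ∘ π) := by
  rintro q ⟨e, h01, hs, rfl⟩
  by_contra hq
  obtain ⟨f, u, hf, hu⟩ := geometric_hahn_banach_closed_point (convex_convexHull ℝ _)
    ((Set.finite_range fun π : Equiv.Perm (Fin L) => pstar L n ∘ π).isClosed_convexHull ℝ) hq
  set c : Fin L → ℝ := fun i => f (Pi.single i 1) with hc
  have hfc : ∀ x : Fin L → ℝ, f x = ∑ i, c i * x i := by
    intro x
    conv_lhs => rw [pi_eq_sum_univ' x]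
    simp [map_sum, hc, mul_comm]
  let σ : Equiv.Perm (Fin L) := Tuple.sort (fun i => - c i)
  have hσ : Antitone (c ∘ σ) := by
    intro a b hab
    have := Tuple.monotone_sort (fun i => - c i) hab
    simpa [σ] using this
  have key : ∀ j, ∑ i, c i * e j i ≤
      ∑ i, c i * (if ((σ.symm i : Fin L) : ℕ) < n j then (1 : ℝ) else 0) := by
    intro j
    obtain ⟨ρ, hρ⟩ := exists_perm_indicator L (n j) (hnL j) (e j) (h01 j) (hs j)
    have hanti : Antitone (fun i : Fin L => if (i : ℕ) < n j then (1 : ℝ) else 0) := by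
      intro a b hab
      have : (a : ℕ) ≤ b := hab
      dsimp only
      split_ifs <;> first | omega | norm_num
    have := (hσ.monovary hanti).sum_mul_comp_perm_le_sum_mul (σ := σ.trans ρ)
    rw [← Equiv.sum_comp σ (fun i => c i * e j i), ← Equiv.sum_comp σ
      (fun i => c i * (if ((σ.symm i : Fin L) : ℕ) < n j then (1 : ℝ) else 0))]
    simp only [hρ, Equiv.symm_apply_apply]
    exact this
  have h2 := hf _ (subset_convexHull ℝ _ ⟨σ.symm, rfl⟩)
  have h3 := h2.trans hu
  rw [hfc, hfc] at h3
  refine absurd h3 (not_lt.mpr ?_)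
  have hM : (0 : ℝ) ≤ 1 / (∑ j, n j : ℝ) := by positivity
  have h4 := mul_le_mul_of_nonneg_left (Finset.sum_le_sum fun j (_ : j ∈ Finset.univ) => key j) hM
  rw [Finset.sum_comm, Finset.sum_comm (f := fun j i => c i *
    (if ((σ.symm i : Fin L) : ℕ) < n j then (1 : ℝ) else 0))] at h4
  simp only [pstar, Function.comp]
  simp only [← Finset.mul_sum, mul_left_comm (c _)] at h4 ⊢
  exact h4

theorem convexHull_eq_convex_comb_of_permuted_pstar (L : ℕ) (hL : 1 ≤ L)
    (n : Fin L → ℕ) (hnL : ∀ j, n j ≤ L) (hne : ∃ j, n j ≠ 0)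
    (p : Fin L → ℝ) (hp : p ∈ convexHull ℝ (Pset L n)) :
    ∃ (r : ℕ) (π : Fin r → Equiv.Perm (Fin L)) (μ : Fin r → ℝ),
      (∀ l, 0 ≤ μ l) ∧ (∑ l, μ l) = 1 ∧
      ∀ i, p i = ∑ l, μ l * pstar L n (π l i) := by
  have h := convexHull_min (Pset_subset L n hnL) (convex_convexHull ℝ _) hp
  obtain ⟨ι, _, w, z, hw, hw1, hz, hx⟩ := mem_convexHull_iff_exists_fintype.mp h
  choose π hπ using hz
  let E := Fintype.equivFin ι
  refine ⟨Fintype.card ι, fun l => π (E.symm l), fun l => w (E.symm l), fun l => hw _, ?_, ?_⟩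
  · rw [← hw1]
    exact Equiv.sum_comp E.symm w
  · intro i
    rw [Equiv.sum_comp E.symm (fun l => w l * pstar L n (π l i)), ← hx, Finset.sum_apply]
    refine Finset.sum_congr rfl fun l _ => ?_
    rw [← hπ l]
    simp
end

section
/- For every real ε > 0 and every integer z ≥ 2, there exists K such that for all integers k ≥ K the following holds: if (p_n)_{n≥1} is a probability mass function on the positive integers with finite mean satisfying p_n ≤ (3/8)^k · z^{2n} for every n ≥ 1, then its entropy in bits H(p) = −∑_{n≥1} p_n·log₂ p_n satisfies H(p) ≤ ε · ∑_{n≥1} n·p_n. -/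
open Filter

lemma aux_pt (x t : ℝ) (hx : 0 ≤ x) : -(x * Real.log x) ≤ t * x + Real.exp (-t) := by
  rcases hx.eq_or_lt with h | h
  · subst h
    simp
    positivity
  · have h1 := Real.log_le_sub_one_of_pos (x := Real.exp (-t) / x) (by positivity)
    rw [Real.log_div (Real.exp_pos _).ne' h.ne', Real.log_exp] at h1
    have h2 := mul_le_mul_of_nonneg_left h1 hx
    have h3 : x * (Real.exp (-t) / x - 1) = Real.exp (-t) - x := by field_simp
    nlinarith

theorem entropy_le_eps_mean (ε : ℝ) (hε : 0 < ε) (z : ℕ) (hz : 2 ≤ z) :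
    ∃ K : ℕ, ∀ k : ℕ, K ≤ k →
      ∀ p : ℕ → ℝ,
        (∀ n : ℕ, 0 ≤ p n) → p 0 = 0 → Summable p → (∑' n : ℕ, p n) = 1 →
        Summable (fun n : ℕ => (n : ℝ) * p n) →
        (∀ n : ℕ, 1 ≤ n → p n ≤ (3 / 8 : ℝ) ^ k * (z : ℝ) ^ (2 * n)) →
        (-∑' n : ℕ, p n * Real.logb 2 (p n)) ≤ ε * ∑' n : ℕ, (n : ℝ) * p n := by
  have hl : 0 < Real.log 2 := Real.log_pos (by norm_num)
  obtain ⟨a, ha⟩ : ∃ a : ℝ, a = ε * Real.log 2 / 2 := ⟨_, rfl⟩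
  have ha0 : 0 < a := by rw [ha]; positivity
  have hsum : Summable (fun n : ℕ => Real.exp (-(a * n))) := by
    have := Real.summable_exp_nat_mul_iff.2 (neg_lt_zero.2 ha0)
    refine this.congr fun n => ?_
    congr 1; ring
  obtain ⟨C, hC⟩ : ∃ C : ℝ, C = ∑' n : ℕ, Real.exp (-(a * n)) := ⟨_, rfl⟩
  obtain ⟨m, hm⟩ := exists_nat_ge (2 * (C / a))
  have htend : Tendsto (fun k : ℕ => (3 / 8 : ℝ) ^ k * ∑ n ∈ Finset.range m, (z : ℝ) ^ (2 * n))
      atTop (nhds 0) := by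
    have := (tendsto_pow_atTop_nhds_zero_of_lt_one (r := (3 / 8 : ℝ)) (by norm_num)
      (by norm_num)).mul_const (∑ n ∈ Finset.range m, (z : ℝ) ^ (2 * n))
    simpa using this
  obtain ⟨K, hK⟩ := eventually_atTop.1
    (htend.eventually_le_const (show (0 : ℝ) < 1 / 2 by norm_num))
  refine ⟨K, fun k hk p hp hp0 hps hp1 hmean hb => ?_⟩
  obtain ⟨M, hM⟩ : ∃ M : ℝ, M = ∑' n : ℕ, (n : ℝ) * p n := ⟨_, rfl⟩
  have hM0 : 0 ≤ M := by
    rw [hM]; exact tsum_nonneg fun n => mul_nonneg n.cast_nonneg (hp n)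
  have hhead : ∑ n ∈ Finset.range m, p n ≤ 1 / 2 := by
    refine le_trans ?_ (hK k hk)
    rw [Finset.mul_sum]
    refine Finset.sum_le_sum fun n _ => ?_
    rcases Nat.eq_zero_or_pos n with h | h
    · subst h; rw [hp0]; positivity
    · exact hb n h
  have htail : ∑ n ∈ Finset.range m, p n + ∑' n, p (n + m) = 1 := by
    rw [hps.sum_add_tsum_nat_add, hp1]
  have hMm : (m : ℝ) / 2 ≤ M := by
    have h1 : ∑ n ∈ Finset.range m, (n : ℝ) * p n + ∑' n : ℕ, ((n + m : ℕ) : ℝ) * p (n + m) = M := by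
      rw [hM]; exact hmean.sum_add_tsum_nat_add m
    have h2 : 0 ≤ ∑ n ∈ Finset.range m, (n : ℝ) * p n :=
      Finset.sum_nonneg fun n _ => mul_nonneg n.cast_nonneg (hp n)
    have hs1 : Summable fun n => p (n + m) := (summable_nat_add_iff m).2 hps
    have hs2 : Summable fun n : ℕ => ((n + m : ℕ) : ℝ) * p (n + m) :=
      (summable_nat_add_iff (f := fun n : ℕ => (n : ℝ) * p n) m).2 hmean
    have h3 : (m : ℝ) * ∑' n, p (n + m) ≤ ∑' n : ℕ, ((n + m : ℕ) : ℝ) * p (n + m) := by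
      rw [← tsum_mul_left]
      refine (hs1.mul_left _).tsum_le_tsum (fun n => ?_) hs2
      refine mul_le_mul_of_nonneg_right ?_ (hp _)
      exact_mod_cast Nat.le_add_left m n
    have h4 : (m : ℝ) * (1 / 2) ≤ m * ∑' n, p (n + m) :=
      mul_le_mul_of_nonneg_left (by linarith) m.cast_nonneg
    linarith
  have hCM : C ≤ a * M := by
    have : C / a ≤ M := by linarith
    rw [div_le_iff₀ ha0] at this
    linarith
  rw [← hM]
  by_cases hS : Summable (fun n : ℕ => p n * Real.logb 2 (p n))
  · have h1 : (-∑' n : ℕ, p n * Real.logb 2 (p n)) ≤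
        ∑' n : ℕ, (1 / Real.log 2) * (a * (n * p n) + Real.exp (-(a * n))) := by
      rw [← tsum_neg]
      refine hS.neg.tsum_le_tsum (fun n => ?_) (((hmean.mul_left a).add hsum).mul_left _)
      have := aux_pt (p n) (a * n) (hp n)
      have h2 := mul_le_mul_of_nonneg_left this (one_div_pos.2 hl).le
      calc -(p n * Real.logb 2 (p n)) = 1 / Real.log 2 * -(p n * Real.log (p n)) := by
            rw [Real.logb]; ring
        _ ≤ _ := h2
        _ = _ := by ring
    rw [tsum_mul_left, (hmean.mul_left a).tsum_add hsum, tsum_mul_left, ← hM, ← hC] at h1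
    refine h1.trans ?_
    rw [one_div, inv_mul_le_iff₀ hl]
    have : 2 * a = ε * Real.log 2 := by rw [ha]; ring
    calc a * M + C ≤ (2 * a) * M := by linarith
      _ = _ := by rw [this]; ring
  · rw [tsum_eq_zero_of_not_summable hS]
    simp; positivity
end

section
/- Let k ≥ 1 be an integer, let σ ∈ {0,1,2,3}^k, and set x = #{i : σ(i) = 1}, y = #{i : σ(i) = 2}. For each integer u with 0 ≤ u ≤ x + y, the number of vectors x₃ ∈ {0,1}^k that are compatible with σ (i.e., σ(i) − x₃(i) ∈ {0,1,2} for all i) and whose x₃-partition has size exactly 2^{x+y−u} (i.e., exactly 2^{x+y−u} pairs (x₁, x₂) ∈ ({0,1}^k)² satisfy x₁ + x₂ + x₃ = σ componentwise) equals the binomial coefficient C(x+y, u). -/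
open Finset

lemma pair_count {k : ℕ} (σ : Fin k → Fin 4) (x₃ : Fin k → Fin 2)
    (h : ∀ i, (σ i : ℤ) - (x₃ i : ℤ) = 0 ∨ (σ i : ℤ) - (x₃ i : ℤ) = 1 ∨
          (σ i : ℤ) - (x₃ i : ℤ) = 2) :
    Fintype.card
            {pr : (Fin k → Fin 2) × (Fin k → Fin 2) //
              ∀ i, ((pr.1 i : ℕ) + (pr.2 i : ℕ) + (x₃ i : ℕ)) = (σ i : ℕ)} =
      2 ^ (Finset.univ.filter (fun i => (σ i : ℕ) = (x₃ i : ℕ) + 1)).card := by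
  let e : {pr : (Fin k → Fin 2) × (Fin k → Fin 2) //
              ∀ i, ((pr.1 i : ℕ) + (pr.2 i : ℕ) + (x₃ i : ℕ)) = (σ i : ℕ)} ≃
      ((i : Fin k) → {p : Fin 2 × Fin 2 // (p.1 : ℕ) + (p.2 : ℕ) + (x₃ i : ℕ) = (σ i : ℕ)}) :=
    { toFun := fun pr i => ⟨(pr.1.1 i, pr.1.2 i), pr.2 i⟩
      invFun := fun f => ⟨(fun i => (f i).1.1, fun i => (f i).1.2), fun i => (f i).2⟩
      left_inv := fun _ => rfl
      right_inv := fun _ => rfl }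
  rw [Fintype.card_congr e, Fintype.card_pi]
  have key : ∀ (s : Fin 4) (t : Fin 2),
      ((s : ℤ) - (t : ℤ) = 0 ∨ (s : ℤ) - (t : ℤ) = 1 ∨ (s : ℤ) - (t : ℤ) = 2) →
      Fintype.card {p : Fin 2 × Fin 2 // (p.1 : ℕ) + (p.2 : ℕ) + (t : ℕ) = (s : ℕ)} =
        if (s : ℕ) = (t : ℕ) + 1 then 2 else 1 := by decide
  rw [Finset.prod_congr rfl (fun i _ => key (σ i) (x₃ i) (h i))]
  rw [Finset.prod_ite]
  simp

theorem card_partitions_of_size (k : ℕ) (hk : 1 ≤ k) (σ : Fin k → Fin 4) (u : ℕ)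
    (hu : u ≤ (Finset.univ.filter (fun i => σ i = 1)).card +
              (Finset.univ.filter (fun i => σ i = 2)).card) :
    Fintype.card
      {x₃ : Fin k → Fin 2 //
        (∀ i, (σ i : ℤ) - (x₃ i : ℤ) = 0 ∨ (σ i : ℤ) - (x₃ i : ℤ) = 1 ∨
          (σ i : ℤ) - (x₃ i : ℤ) = 2) ∧
        Fintype.card
            {pr : (Fin k → Fin 2) × (Fin k → Fin 2) //
              ∀ i, ((pr.1 i : ℕ) + (pr.2 i : ℕ) + (x₃ i : ℕ)) = (σ i : ℕ)} =
          2 ^ ((Finset.univ.filter (fun i => σ i = 1)).card +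
               (Finset.univ.filter (fun i => σ i = 2)).card - u)} =
    ((Finset.univ.filter (fun i => σ i = 1)).card +
     (Finset.univ.filter (fun i => σ i = 2)).card).choose u := by
  set S := Finset.univ.filter (fun i => σ i = 1 ∨ σ i = 2) with hS
  have hN : (Finset.univ.filter (fun i => σ i = 1)).card +
      (Finset.univ.filter (fun i => σ i = 2)).card = S.card := by
    rw [hS, Finset.filter_or, Finset.card_union_of_disjoint]
    rw [Finset.disjoint_filter]
    intro i _ h1 h2
    rw [h1] at h2
    exact absurd h2 (by decide)
  rw [hN] at hu ⊢
  rw [← Nat.choose_symm hu, ← Finset.card_powersetCard, Fintype.card_subtype]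
  have k1 : ∀ (s : Fin 4) (t : Fin 2), (s : ℕ) = (t : ℕ) + 1 → s = 1 ∨ s = 2 := by decide
  have k2 : ∀ (s : Fin 4) (t t' : Fin 2),
      ((s : ℤ) - (t : ℤ) = 0 ∨ (s : ℤ) - (t : ℤ) = 1 ∨ (s : ℤ) - (t : ℤ) = 2) →
      ((s : ℤ) - (t' : ℤ) = 0 ∨ (s : ℤ) - (t' : ℤ) = 1 ∨ (s : ℤ) - (t' : ℤ) = 2) →
      ((s : ℕ) = (t : ℕ) + 1 ↔ (s : ℕ) = (t' : ℕ) + 1) → t = t' := by decide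
  have k3 : ∀ (s : Fin 4) (b : Bool), (b = true → s = 1 ∨ s = 2) → ∃ t : Fin 2,
      ((s : ℤ) - (t : ℤ) = 0 ∨ (s : ℤ) - (t : ℤ) = 1 ∨ (s : ℤ) - (t : ℤ) = 2) ∧
      ((s : ℕ) = (t : ℕ) + 1 ↔ b = true) := by decide
  refine Finset.card_bij
    (fun x₃ _ => Finset.univ.filter (fun i => (σ i : ℕ) = (x₃ i : ℕ) + 1)) ?_ ?_ ?_
  · intro x hx
    obtain ⟨hc, hp⟩ := (Finset.mem_filter.1 hx).2
    rw [pair_count σ x hc] at hp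
    refine Finset.mem_powersetCard.2 ⟨?_, Nat.pow_right_injective le_rfl hp⟩
    intro i hi
    exact Finset.mem_filter.2 ⟨Finset.mem_univ _, k1 _ _ (Finset.mem_filter.1 hi).2⟩
  · intro x hx y hy hxy
    have hc := (Finset.mem_filter.1 hx).2.1
    have hd := (Finset.mem_filter.1 hy).2.1
    funext i
    refine k2 (σ i) _ _ (hc i) (hd i) ?_
    have := Finset.ext_iff.1 hxy i
    simpa using this
  · intro T hT
    obtain ⟨hTS, hTc⟩ := Finset.mem_powersetCard.1 hT
    have : ∀ i, ∃ t : Fin 2,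
      ((σ i : ℤ) - (t : ℤ) = 0 ∨ (σ i : ℤ) - (t : ℤ) = 1 ∨ (σ i : ℤ) - (t : ℤ) = 2) ∧
      ((σ i : ℕ) = (t : ℕ) + 1 ↔ decide (i ∈ T) = true) := fun i =>
        k3 (σ i) (decide (i ∈ T)) (fun h => (Finset.mem_filter.1 (hTS (of_decide_eq_true h))).2)
    choose x hx hxT using this
    have hE : Finset.univ.filter (fun i => (σ i : ℕ) = (x i : ℕ) + 1) = T := by
      ext i
      rw [Finset.mem_filter, hxT i]
      simp
    refine ⟨x, Finset.mem_filter.2 ⟨Finset.mem_univ _, hx, ?_⟩, hE⟩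
    rw [pair_count σ x hx, hE, hTc]
end
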